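/- Let c ∈ C ↦ H_c be a continuous family (for the C² compact-open topology) of C²-convex-in-the-fiber Hamiltonians on T*M, C a metric space. Fix (x, c₀, λ₀) ∈ 𝒰₋^∞ and ε > 0. Then there exist a neighborhood 𝒩₊ of (x, c₀, λ₀) in T*M × C × ℝ and T > 0 such that: (a) for every (−t, y, c, λ) ∈ 𝒰₋ with (y, c, λ) ∈ 𝒩₊ and t ≥ T, one has h(−t, y, c, λ) ≤ h₊(x, c₀, λ₀) + ε·Id; (b) for every (y, c, λ) ∈ 𝒩₊ ∩ 𝒰₋^∞, one has h₊(y, c, λ) ≤ h₊(x, c₀, λ₀) + ε·Id. -/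

import Mathlib

/-!
Throughout, the closed manifold `M = 𝕋^d = ℝ^d/ℤ^d` is modelled by `ℤ^d`-periodic
functions on `ℝ^d` (with the Euclidean structure), and its (co)tangent bundle
`T^*𝕋^d = 𝕋^d × ℝ^d` by `ℤ^d`-periodic (in the base variable) data on `ℝ^d × ℝ^d`.
-/

open scoped RealInnerProductSpace
open Filter MeasureTheory Metric Set Asymptotics

noncomputable section

/-- The universal cover `ℝ^d` of the torus `𝕋^d`. -/
abbrev Euc (d : ℕ) : Type := EuclideanSpace ℝ (Fin d)

/-- The phase space `T^*𝕋^d`, modelled as `ℝ^d × ℝ^d` with `ℤ^d`-periodic data. -/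
abbrev Phase (d : ℕ) : Type := Euc d × Euc d

/-- An integer vector, viewed in `ℝ^d`. -/
def intVec {d : ℕ} (k : Fin d → ℤ) : Euc d := WithLp.toLp 2 (fun i => (k i : ℝ))

/-- `f` descends to the torus `𝕋^d = ℝ^d/ℤ^d`. -/
def PerFun {d : ℕ} {α : Type*} (f : Euc d → α) : Prop :=
  ∀ (k : Fin d → ℤ) (x : Euc d), f (x + intVec k) = f x

/-- `H` descends to `T^*𝕋^d = 𝕋^d × ℝ^d`. -/
def PerPhase {d : ℕ} {α : Type*} (H : Phase d → α) : Prop :=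
  ∀ (k : Fin d → ℤ) (q p : Euc d), H (q + intVec k, p) = H (q, p)

/-- Positive definiteness of the fiberwise Hessian. -/
def ConvexInFiber {d : ℕ} (H : Phase d → ℝ) : Prop :=
  ∀ q p v, v ≠ 0 → 0 < iteratedFDeriv ℝ 2 (fun p' => H (q, p')) p ![v, v]

/-- A `C²` Tonelli Hamiltonian on `T^*𝕋^d`. -/
structure TonelliHam {d : ℕ} (H : Phase d → ℝ) : Prop where
  periodic : PerPhase H
  smooth : ContDiff ℝ 2 H
  convex : ConvexInFiber H
  superlinear : ∀ A : ℝ, ∃ B : ℝ, ∀ q p, A * ‖p‖ + B ≤ H (q, p)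

/-- A `C²` Tonelli Lagrangian on `T𝕋^d`. -/
structure TonelliLag {d : ℕ} (L : Phase d → ℝ) : Prop where
  periodic : PerPhase L
  smooth : ContDiff ℝ 2 L
  convex : ConvexInFiber L
  superlinear : ∀ A : ℝ, ∃ B : ℝ, ∀ q v, A * ‖v‖ + B ≤ L (q, v)

/-- The Lagrangian associated to `H` by Legendre duality. -/
def LegendreL {d : ℕ} (H : Phase d → ℝ) (x : Phase d) : ℝ :=
  sSup {r | ∃ p : Euc d, r = ⟪p, x.2⟫ - H (x.1, p)}

/-- The Mañé critical value `α(H)`. -/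
def maneCritical {d : ℕ} (H : Phase d → ℝ) : ℝ :=
  sInf {c | ∃ u : Euc d → ℝ, ContDiff ℝ (⊤ : ℕ∞) u ∧ PerFun u ∧ ∀ q, H (q, gradient u q) ≤ c}

/-- The Mañé critical value `α(c)` of the cohomology class of the constant form `cf`. -/
def maneCriticalOf {d : ℕ} (H : Phase d → ℝ) (cf : Euc d) : ℝ :=
  maneCritical fun x : Phase d => H (x.1, cf + x.2)

/-- `γ` is absolutely continuous on `[a,b]` with a.e. derivative `γ'`. -/
def ACOn {d : ℕ} (γ γ' : ℝ → Euc d) (a b : ℝ) : Prop :=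
  IntervalIntegrable γ' volume a b ∧ ∀ t ∈ Icc a b, γ t = γ a + ∫ s in a..t, γ' s

/-- Values entering the (discounted, cohomologically twisted) Lax–Oleinik infimum. -/
def LOvals {d : ℕ} (L : Phase d → ℝ) (cf : Euc d) (av lam : ℝ) (u : Euc d → ℝ) (t : ℝ)
    (q : Euc d) : Set ℝ :=
  {r | ∃ γ γ' : ℝ → Euc d, ACOn γ γ' (-t) 0 ∧ γ 0 = q ∧
     IntervalIntegrable (fun s => Real.exp (lam * s) * (L (γ s, γ' s) - ⟪cf, γ' s⟫ + av))
       volume (-t) 0 ∧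
     r = Real.exp (-(lam * t)) * u (γ (-t)) +
         ∫ s in (-t)..0, Real.exp (lam * s) * (L (γ s, γ' s) - ⟪cf, γ' s⟫ + av)}

/-- The (discounted, twisted) Lax–Oleinik semigroup `T^{cf,λ}_t u (q)`. -/
def LaxOleinik {d : ℕ} (L : Phase d → ℝ) (cf : Euc d) (av lam : ℝ) (u : Euc d → ℝ) (t : ℝ)
    (q : Euc d) : ℝ :=
  sInf (LOvals L cf av lam u t q)

/-- A weak K.A.M. solution: a fixed point of the Lax–Oleinik semigroup. -/
def IsWeakKAM {d : ℕ} (H : Phase d → ℝ) (u : Euc d → ℝ) : Prop :=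
  Continuous u ∧ PerFun u ∧
    ∀ t > (0:ℝ), ∀ q, LaxOleinik (LegendreL H) 0 (maneCritical H) 0 u t q = u q

/-- A fixed point of the modified Lax–Oleinik semigroup `T^c_t` for the class `cf`. -/
def IsFixedPtModified {d : ℕ} (H : Phase d → ℝ) (cf : Euc d) (u : Euc d → ℝ) : Prop :=
  Continuous u ∧ PerFun u ∧
    ∀ t > (0:ℝ), ∀ q, LaxOleinik (LegendreL H) cf (maneCriticalOf H cf) 0 u t q = u q

/-- The discounted solution `u_λ` of `λu + H(x,du) = α(H)`, via its variational formula. -/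
def IsDiscountedSol {d : ℕ} (H : Phase d → ℝ) (lam : ℝ) (u : Euc d → ℝ) : Prop :=
  Continuous u ∧ PerFun u ∧
    ∀ q, u q = sInf {r | ∃ γ γ' : ℝ → Euc d, (∀ a ≤ (0:ℝ), ACOn γ γ' a 0) ∧ γ 0 = q ∧
      IntegrableOn (fun s => Real.exp (lam * s) * (LegendreL H (γ s, γ' s) + maneCritical H))
        (Iic 0) volume ∧
      r = ∫ s in Iic (0:ℝ), Real.exp (lam * s) * (LegendreL H (γ s, γ' s) + maneCritical H)}

/-- The `λ`-discounted Hamiltonian vector field `(∂H/∂p, -∂H/∂q - λp)`. -/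
def hamVF {d : ℕ} (H : Phase d → ℝ) (lam : ℝ) (x : Phase d) : Phase d :=
  (gradient (fun p => H (x.1, p)) x.2, -gradient (fun q => H (q, x.2)) x.1 - lam • x.2)

/-- `φ` is the (conformally) Hamiltonian flow of equation (1) for `(H, λ)`. -/
def IsConformalFlow {d : ℕ} (H : Phase d → ℝ) (lam : ℝ) (φ : ℝ → Phase d → Phase d) : Prop :=
  (∀ x, φ 0 x = x) ∧ (∀ s t x, φ s (φ t x) = φ (s + t) x) ∧
    ∀ x t, HasDerivAt (fun τ => φ τ x) (hamVF H lam (φ t x)) t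

/-- The vertical subspace `V = ker Dπ`. -/
def Vert (d : ℕ) : Submodule ℝ (Phase d) :=
  Submodule.prod (⊥ : Submodule ℝ (Euc d)) (⊤ : Submodule ℝ (Euc d))

/-- The image `Dφ_t(y) V(y)` of the vertical at `y` by the linearized flow. -/
def pushV {d : ℕ} (φ : ℝ → Phase d → Phase d) (t : ℝ) (y : Phase d) : Submodule ℝ (Phase d) :=
  Submodule.map (fderiv ℝ (φ t) y).toLinearMap (Vert d)

/-- `G_t(x) = Dφ_t V(φ_{-t} x)`. -/
def GreenT {d : ℕ} (φ : ℝ → Phase d → Phase d) (t : ℝ) (x : Phase d) : Submodule ℝ (Phase d) :=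
  pushV φ t (φ (-t) x)

/-- The piece of orbit `(φ_t x)_{t ∈ I}` has no conjugate points. -/
def NoConjPts {d : ℕ} (φ : ℝ → Phase d → Phase d) (x : Phase d) (I : Set ℝ) : Prop :=
  ∀ s ∈ I, ∀ t ∈ I, s ≠ t → pushV φ (t - s) (φ s x) ⊓ Vert d = ⊥

/-- `S` is the height `ℋ(G)` of the Lagrangian subspace `G`:
`G` is the graph `{(δθ, S δθ)}` of the symmetric map `S`. -/
def IsHeight {d : ℕ} (G : Submodule ℝ (Phase d)) (S : Euc d →L[ℝ] Euc d) : Prop :=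
  (∀ v w, ⟪S v, w⟫ = ⟪v, S w⟫) ∧ G = LinearMap.graph (S : Euc d →ₗ[ℝ] Euc d)

open Classical in
/-- The height of a subspace transverse to the vertical (junk value `0` otherwise). -/
def heightOf {d : ℕ} (G : Submodule ℝ (Phase d)) : Euc d →L[ℝ] Euc d :=
  if h : ∃ S, IsHeight G S then h.choose else 0

/-- Order of symmetric operators as quadratic forms. -/
def SymLE {d : ℕ} (S T : Euc d →L[ℝ] Euc d) : Prop := ∀ v, ⟪S v, v⟫ ≤ ⟪T v, v⟫

/-- Strict order of symmetric operators as quadratic forms (positive definite difference). -/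
def SymLT {d : ℕ} (S T : Euc d →L[ℝ] Euc d) : Prop := ∀ v, v ≠ 0 → ⟪S v, v⟫ < ⟪T v, v⟫

/-- `u` has (Alexandrov) derivative `p` and second derivative `S` at `θ`. -/
def HasAlexandrovAt {d : ℕ} (u : Euc d → ℝ) (p : Euc d) (S : Euc d →L[ℝ] Euc d)
    (θ : Euc d) : Prop :=
  HasGradientAt u p θ ∧
    (fun y => u y - u θ - ⟪p, y - θ⟫ - (1/2) * ⟪S (y - θ), y - θ⟫)
      =o[nhds θ] fun y => ‖y - θ‖ ^ 2

open Classical in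
/-- The Alexandrov second derivative `D²u(θ)` (junk value `0` where it does not exist). -/
def D2 {d : ℕ} (u : Euc d → ℝ) (θ : Euc d) : Euc d →L[ℝ] Euc d :=
  if h : ∃ pS : Euc d × (Euc d →L[ℝ] Euc d), HasAlexandrovAt u pS.1 pS.2 θ then h.choose.2 else 0

/-- `‖S‖ = sup_{‖v‖=1} |S(v,v)|`. -/
def qNorm {d : ℕ} (S : Euc d →L[ℝ] Euc d) : ℝ :=
  ⨆ v : (sphere (0 : Euc d) 1 : Set (Euc d)), |⟪S v.1, v.1⟫|

/-- A fundamental domain of `𝕋^d` in `ℝ^d`. -/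
def fundCube (d : ℕ) : Set (Euc d) := {x | ∀ i, x i ∈ Ico (0:ℝ) 1}

/-- The distance `d_{2,1}(u,v) = ∫_{𝕋^d} ‖D²u - D²v‖`. -/
def d21 {d : ℕ} (u v : Euc d → ℝ) : ℝ := ∫ θ in fundCube d, qNorm (D2 u θ - D2 v θ)

/-- Semi-concavity. -/
def SemiConcave {d : ℕ} (u : Euc d → ℝ) : Prop :=
  ∃ K : ℝ, ∀ x, ∃ p, ∀ y, u y ≤ u x + ⟪p, y - x⟫ + K * ‖y - x‖ ^ 2

/-- `u` is upper Green regular: at Lebesgue-a.e. `θ`, `ℋ(G₊(θ, du(θ))) = D²u(θ)`. -/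
def UpperGreenRegular {d : ℕ} (φ : ℝ → Phase d → Phase d) (u : Euc d → ℝ) : Prop :=
  ∀ᵐ θ ∂(volume : Measure (Euc d)), ∃ p S, HasGradientAt u p θ ∧
    (∀ t > (0:ℝ), ∃ S', IsHeight (GreenT φ t (θ, p)) S') ∧
    Tendsto (fun t : ℝ => heightOf (GreenT φ t (θ, p))) atTop (nhds S) ∧
    HasAlexandrovAt u p S θ

/-- The graph `𝒢(du) ⊂ T^*𝕋^d` of the differential of `u`. -/
def gradGraph {d : ℕ} (u : Euc d → ℝ) : Set (Phase d) := {x | HasGradientAt u x.2 x.1}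

/-- The graph `𝒢(η_c + du)` where `η_c` is the constant form `cf`. -/
def gradGraphShift {d : ℕ} (cf : Euc d) (u : Euc d → ℝ) : Set (Phase d) :=
  {x | ∃ p, HasGradientAt u p x.1 ∧ x.2 = cf + p}

/-- Continuity of `c ↦ H_c` for the `C²` compact-open topology. -/
def C2CompactOpenCont {d : ℕ} {C : Type*} [MetricSpace C] (Hfam : C → Phase d → ℝ) : Prop :=
  ∀ (c0 : C) (K : Set (Phase d)), IsCompact K → ∀ ε > (0:ℝ), ∃ δ > (0:ℝ), ∀ c : C,
    dist c c0 < δ → ∀ j : ℕ, j ≤ 2 → ∀ x ∈ K,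
      ‖iteratedFDeriv ℝ j (Hfam c) x - iteratedFDeriv ℝ j (Hfam c0) x‖ ≤ ε

/-- `h(t, x, c, λ) = ℋ(G_{-t}^{c,λ}(x))`, the height of `Dφ_{-t} V(φ_t x)`. -/
def hGreenMinus {d : ℕ} (φ : ℝ → Phase d → Phase d) (t : ℝ) (x : Phase d) :
    Euc d →L[ℝ] Euc d :=
  heightOf (pushV φ (-t) (φ t x))

/-- `h(-t, x, c, λ) = ℋ(G_t^{c,λ}(x))`, the height of `Dφ_t V(φ_{-t} x)`. -/
def hGreenPlus {d : ℕ} (φ : ℝ → Phase d → Phase d) (t : ℝ) (x : Phase d) :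
    Euc d →L[ℝ] Euc d :=
  heightOf (pushV φ t (φ (-t) x))

open scoped RealInnerProductSpace
open Filter MeasureTheory Metric Set Asymptotics

section ode
variable {F : Type*} [NormedAddCommGroup F] [NormedSpace ℝ F]

theorem fence_bound {f f' : ℝ → F} {T m K η : ℝ}
    (hf : ∀ τ ∈ Icc 0 T, HasDerivWithinAt f (f' τ) (Icc 0 T) τ)
    (hK : 0 ≤ K) (hη : 0 ≤ η) (hm : η < m) (h0 : ‖f 0‖ ≤ m)
    (bound : ∀ τ ∈ Ico 0 T, ‖f τ‖ ≤ m * Real.exp ((K + 1) * T) → ‖f' τ‖ ≤ K * ‖f τ‖ + η) :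
    ∀ τ ∈ Icc 0 T, ‖f τ‖ ≤ m * Real.exp ((K + 1) * T) := by
  have hmpos : 0 < m := lt_of_le_of_lt hη hm
  have hB : ∀ τ : ℝ, HasDerivAt (fun τ => m * Real.exp ((K + 1) * τ))
      (m * (Real.exp ((K + 1) * τ) * (K + 1))) τ := by
    intro τ
    have := (((hasDerivAt_id τ).const_mul (K + 1)).exp).const_mul m
    simpa using this
  have hmono : ∀ τ ∈ Icc (0:ℝ) T, m * Real.exp ((K + 1) * τ) ≤ m * Real.exp ((K + 1) * T) := by
    intro τ hτ
    have := hτ.2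
    gcongr
  intro τ hτ
  refine le_trans ?_ (hmono τ hτ)
  refine image_norm_le_of_norm_deriv_right_lt_deriv_boundary' (f := f) (f' := f') (a := 0) (b := T)
    (fun t ht => (hf t ht).continuousWithinAt) ?_ (by simpa using h0)
    (fun t _ => (hB t).continuousAt.continuousWithinAt) (fun t _ => (hB t).hasDerivWithinAt) ?_ hτ
  · intro t ht
    exact (hf t ⟨ht.1, ht.2.le⟩).mono_of_mem_nhdsWithin (Icc_mem_nhdsGE_of_mem ht)
  · intro t ht he
    have h1 := bound t ht (he.le.trans (hmono t ⟨ht.1, ht.2.le⟩))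
    have h2 : 1 ≤ Real.exp ((K + 1) * t) := Real.one_le_exp (mul_nonneg (by linarith) ht.1)
    have h3 : m ≤ m * Real.exp ((K + 1) * t) := le_mul_of_one_le_right hmpos.le h2
    rw [he] at h1
    nlinarith

theorem trunc_lip (R : ℝ) (hR : 0 < R) (w v : F) :
    ‖(R / max R ‖w‖) • w - (R / max R ‖v‖) • v‖ ≤ 2 * ‖w - v‖ := by
  have hw : 0 < max R ‖w‖ := lt_max_of_lt_left hR
  have hv : 0 < max R ‖v‖ := lt_max_of_lt_left hR
  have e : (R / max R ‖w‖) • w - (R / max R ‖v‖) • v =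
      (R / max R ‖w‖) • (w - v) + (R / max R ‖w‖ - R / max R ‖v‖) • v := by
    rw [smul_sub, sub_smul]; abel
  rw [e]
  refine (norm_add_le _ _).trans ?_
  rw [norm_smul, norm_smul]
  have h1 : ‖R / max R ‖w‖‖ ≤ 1 := by
    rw [Real.norm_of_nonneg (by positivity)]
    exact div_le_one_of_le₀ (le_max_left _ _) hw.le
  have h2 : ‖R / max R ‖w‖ - R / max R ‖v‖‖ * ‖v‖ ≤ ‖w - v‖ := by
    have e2 : R / max R ‖w‖ - R / max R ‖v‖ =
        (R / max R ‖w‖) * ((max R ‖v‖ - max R ‖w‖) / max R ‖v‖) := by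
      field_simp
    have h4 : |max R ‖v‖ - max R ‖w‖| ≤ ‖w - v‖ := by
      refine (abs_max_sub_max_le_max _ _ _ _).trans ?_
      simp only [sub_self, abs_zero]
      rw [max_eq_right (abs_nonneg _)]
      rw [norm_sub_rev]; exact abs_norm_sub_norm_le _ _
    rw [e2, norm_mul, norm_div (max R ‖v‖ - _), Real.norm_eq_abs (max R ‖v‖ - _), Real.norm_of_nonneg hv.le]
    calc ‖R / max R ‖w‖‖ * (|max R ‖v‖ - max R ‖w‖| / max R ‖v‖) * ‖v‖
        ≤ 1 * (‖w - v‖ / max R ‖v‖) * max R ‖v‖ := by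
          gcongr
          exact le_max_right _ _
      _ = ‖w - v‖ := by field_simp
  nlinarith [norm_nonneg (w - v)]

theorem lin_ode [CompleteSpace F] {A : ℝ → F →L[ℝ] F} {T : ℝ} (hT : 0 ≤ T)
    (hA : ContinuousOn A (Icc 0 T)) (w0 : F) :
    ∃ w : ℝ → F, w 0 = w0 ∧ ∀ τ ∈ Icc 0 T, HasDerivWithinAt w (A τ (w τ)) (Icc 0 T) τ := by
  obtain ⟨K, hK⟩ := isCompact_Icc.exists_bound_of_continuousOn hA
  have hK0 : 0 ≤ K := (norm_nonneg _).trans (hK 0 ⟨le_rfl, hT⟩)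
  set R : ℝ := (‖w0‖ + 1) * Real.exp ((K + 1) * T) with hR
  have hRpos : 0 < R := by positivity
  set χ : F → F := fun w => (R / max R ‖w‖) • w with hχ
  have hχR : ∀ w, ‖χ w‖ ≤ R := by
    intro w
    have hw : 0 < max R ‖w‖ := lt_max_of_lt_left hRpos
    simp only [hχ, norm_smul]
    rw [Real.norm_of_nonneg (by positivity), div_mul_eq_mul_div, div_le_iff₀ hw]
    gcongr
    exact le_max_right _ _
  have hχid : ∀ w, ‖w‖ ≤ R → χ w = w := by
    intro w hw
    simp only [hχ, max_eq_left hw, div_self hRpos.ne', one_smul]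
  have hPL : IsPicardLindelof (fun t w => A t (χ w)) (tmin := 0) (tmax := T) ⟨0, le_rfl, hT⟩ w0
      (⟨K * R * T, by positivity⟩) 0 ⟨K * R, by positivity⟩ ⟨K * 2, by positivity⟩ := by
    constructor
    · intro t ht
      refine LipschitzOnWith.of_dist_le_mul ?_
      intro u _ v _
      rw [dist_eq_norm, dist_eq_norm, ← map_sub]
      refine ((A t).le_opNorm _).trans ?_
      have := trunc_lip R hRpos u v
      have h2 := hK t ht
      show _ ≤ K * 2 * _
      rw [mul_assoc]
      exact mul_le_mul h2 this (norm_nonneg _) hK0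
    · intro u _
      exact hA.clm_apply continuousOn_const
    · intro t ht u _
      exact ((A t).le_opNorm _).trans (mul_le_mul (hK t ht) (hχR _) (norm_nonneg _) hK0)
    · show K * R * max (T - 0) (0 - 0) ≤ K * R * T - 0
      simp [max_eq_left hT]
  obtain ⟨w, hw0, hw⟩ := hPL.exists_eq_forall_mem_Icc_hasDerivWithinAt₀
  have hw0' : w 0 = w0 := hw0
  have hb := fence_bound (m := ‖w0‖ + 1) (η := 0) hw hK0 le_rfl (by positivity)
    (by rw [hw0']; linarith) (by
      intro τ hτ hle
      rw [hχid _ hle, add_zero]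
      exact ((A τ).le_opNorm _).trans
        (mul_le_mul_of_nonneg_right (hK τ ⟨hτ.1, hτ.2.le⟩) (norm_nonneg _)))
  refine ⟨w, hw0', fun τ hτ => ?_⟩
  have := hw τ hτ
  simp only [hχid _ (hb τ hτ)] at this
  exact this

end ode

section flow
variable {E : Type*} [NormedAddCommGroup E] [NormedSpace ℝ E]

/-- uniform closeness of the derivative near a compact orbit piece -/
theorem unif_deriv {X : E → E} (hX : ContDiff ℝ 1 X) {z : ℝ → E} {T : ℝ}
    (hz : ContinuousOn z (Icc 0 T)) {ε : ℝ} (hε : 0 < ε) :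
    ∃ δ > 0, ∀ τ ∈ Icc 0 T, ∀ w, ‖w - z τ‖ ≤ δ →
      ‖fderiv ℝ X w - fderiv ℝ X (z τ)‖ ≤ ε ∧
      ‖X w - X (z τ) - fderiv ℝ X (z τ) (w - z τ)‖ ≤ ε * ‖w - z τ‖ := by
  have hc : Continuous (fderiv ℝ X) := hX.continuous_fderiv one_ne_zero
  have hcomp : IsCompact (z '' Icc 0 T) := isCompact_Icc.image_of_continuousOn hz
  have := hcomp.uniformContinuousAt_of_continuousAt (fderiv ℝ X)
    (fun a _ => hc.continuousAt) (dist_mem_uniformity hε)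
  obtain ⟨δ, hδ, h⟩ := Metric.mem_uniformity_dist.1 this
  have key : ∀ τ ∈ Icc 0 T, ∀ w, ‖w - z τ‖ ≤ δ / 2 →
      ‖fderiv ℝ X w - fderiv ℝ X (z τ)‖ ≤ ε := by
    intro τ hτ w hw
    have h1 : dist (z τ) w < δ := by
      rw [dist_comm, dist_eq_norm]; linarith
    have h2 := h h1 (mem_image_of_mem z hτ)
    simp only [mem_ofPred_eq] at h2
    rw [dist_comm, dist_eq_norm] at h2
    exact h2.le
  refine ⟨δ / 2, by positivity, fun τ hτ w hw => ⟨key τ hτ w hw, ?_⟩⟩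
  refine (convex_closedBall (z τ) (δ / 2)).norm_image_sub_le_of_norm_fderiv_le'
    (𝕜 := ℝ) (f := X) (fun u _ => (hX.differentiable one_ne_zero) u)
    (fun u hu => key τ hτ u (by simpa [dist_eq_norm] using hu)) (by simp; positivity)
    (by simpa [dist_eq_norm] using hw)

theorem flow_deriv_aux [CompleteSpace E] {X : E → E} (hX : ContDiff ℝ 1 X) {φ : ℝ → E → E}
    (h0 : ∀ x, φ 0 x = x) (hφ : ∀ x t, HasDerivAt (fun τ => φ τ x) (X (φ t x)) t) (y : E)
    {T : ℝ} (hT : 0 ≤ T) :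
    ∃ W : ℝ → E →L[ℝ] E, W 0 = ContinuousLinearMap.id ℝ E ∧
      (∀ τ ∈ Icc 0 T, HasDerivWithinAt W (fderiv ℝ X (φ τ y) ∘L W τ) (Icc 0 T) τ) ∧
      ∀ τ ∈ Icc 0 T, HasFDerivAt (φ τ) (W τ) y := by
  have hzc : ∀ u, Continuous (fun τ => φ τ u) := fun u =>
    continuous_iff_continuousAt.2 fun t => (hφ u t).continuousAt
  have hAc : Continuous (fun τ => fderiv ℝ X (φ τ y)) :=
    (hX.continuous_fderiv one_ne_zero).comp (hzc y)
  obtain ⟨W, hW0, hW⟩ := lin_ode (A := fun τ => ContinuousLinearMap.compL ℝ E E E (fderiv ℝ X (φ τ y)))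
    hT ((ContinuousLinearMap.continuous _).comp hAc).continuousOn (ContinuousLinearMap.id ℝ E)
  simp only [ContinuousLinearMap.compL_apply] at hW
  refine ⟨W, hW0, hW, ?_⟩
  obtain ⟨K, hK⟩ := isCompact_Icc.exists_bound_of_continuousOn (hAc.continuousOn (s := Icc 0 T))
  have hK0 : 0 ≤ K := (norm_nonneg _).trans (hK 0 ⟨le_rfl, hT⟩)
  intro τ0 hτ0
  rw [hasFDerivAt_iff_isLittleO, isLittleO_iff]
  intro c hc
  -- constants
  set C1 := Real.exp ((K + 1 + 1) * T) with hC1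
  set C2 := Real.exp ((K + 1) * T) with hC2
  have hC1p : 0 < C1 := Real.exp_pos _
  have hC2p : 0 < C2 := Real.exp_pos _
  obtain ⟨δ1, hδ1, H1⟩ := unif_deriv hX (hzc y).continuousOn (T := T) one_pos
  obtain ⟨δ2, hδ2, H2⟩ := unif_deriv hX (hzc y).continuousOn (T := T)
    (ε := c / (2 * C1 * C2)) (by positivity)
  set δ := min δ1 δ2
  have hδ : 0 < δ := lt_min hδ1 hδ2
  filter_upwards [Metric.ball_mem_nhds y (show 0 < δ / C1 by positivity)] with y' hy'
  rw [mem_ball, dist_eq_norm, lt_div_iff₀ hC1p] at hy'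
  by_cases hyy : y' = y
  · subst hyy; simp
  have hmpos : 0 < ‖y' - y‖ := norm_pos_iff.2 (sub_ne_zero.2 hyy)
  have hd : ∀ τ ∈ Icc 0 T, HasDerivWithinAt (fun τ => φ τ y' - φ τ y)
      (X (φ τ y') - X (φ τ y)) (Icc 0 T) τ := fun τ _ =>
    ((hφ y' τ).sub (hφ y τ)).hasDerivWithinAt
  have B1 := fence_bound (m := ‖y' - y‖) (K := K + 1) (η := 0) hd (by linarith) le_rfl hmpos
    (by simp [h0]) (by
      intro τ hτ hle
      have hτ' : τ ∈ Icc 0 T := ⟨hτ.1, hτ.2.le⟩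
      have hle' : ‖φ τ y' - φ τ y‖ ≤ δ1 := hle.trans (hy'.le.trans (min_le_left _ _))
      have h1 := (H1 τ hτ' _ hle').2
      have h2 := (fderiv ℝ X (φ τ y)).le_of_opNorm_le (hK τ hτ') (φ τ y' - φ τ y)
      have h3 := norm_le_norm_sub_add (X (φ τ y') - X (φ τ y))
        (fderiv ℝ X (φ τ y) (φ τ y' - φ τ y))
      linarith)
  have he : ∀ τ ∈ Icc 0 T, HasDerivWithinAt (fun τ => φ τ y' - φ τ y - W τ (y' - y))
      (X (φ τ y') - X (φ τ y) - fderiv ℝ X (φ τ y) (W τ (y' - y))) (Icc 0 T) τ := fun τ hτ => by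
    have := ((hW τ hτ).clm_apply (hasDerivWithinAt_const τ (Icc 0 T) (y' - y)))
    have h3 := (hd τ hτ).fun_sub this
    simpa using h3
  have B2 := fence_bound (m := c / C2 * ‖y' - y‖) (K := K)
    (η := c / (2 * C1 * C2) * (‖y' - y‖ * C1)) he hK0 (by positivity) (by
      have : c / (2 * C1 * C2) * (‖y' - y‖ * C1) = (c / C2 * ‖y' - y‖) / 2 := by field_simp
      rw [this]; exact half_lt_self (by positivity))
    (by simp only [h0, hW0]; simp; positivity) (by
      intro τ hτ _
      have hτ' : τ ∈ Icc 0 T := ⟨hτ.1, hτ.2.le⟩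
      have hb := B1 τ hτ'
      have h1 := (H2 τ hτ' _ (hb.trans (hy'.le.trans (min_le_right _ _)))).2
      have h2 := (fderiv ℝ X (φ τ y)).le_of_opNorm_le (hK τ hτ')
        (φ τ y' - φ τ y - W τ (y' - y))
      have e : X (φ τ y') - X (φ τ y) - fderiv ℝ X (φ τ y) (W τ (y' - y)) =
        fderiv ℝ X (φ τ y) (φ τ y' - φ τ y - W τ (y' - y)) +
        (X (φ τ y') - X (φ τ y) - fderiv ℝ X (φ τ y) (φ τ y' - φ τ y)) := by
        simp only [map_sub]; abel
      rw [e]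
      refine (norm_add_le _ _).trans (add_le_add h2 (h1.trans ?_))
      gcongr)
  have := B2 τ0 hτ0
  calc _ ≤ c / C2 * ‖y' - y‖ * C2 := this
    _ = c * ‖y' - y‖ := by field_simp

theorem flow_deriv [CompleteSpace E] {X : E → E} (hX : ContDiff ℝ 1 X) {φ : ℝ → E → E}
    (h0 : ∀ x, φ 0 x = x) (hφ : ∀ x t, HasDerivAt (fun τ => φ τ x) (X (φ t x)) t) (y : E)
    {T : ℝ} (hT : 0 ≤ T) :
      (∀ τ ∈ Icc 0 T, HasDerivWithinAt (fun τ => fderiv ℝ (φ τ) y)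
        (fderiv ℝ X (φ τ y) ∘L fderiv ℝ (φ τ) y) (Icc 0 T) τ) ∧
      ∀ τ ∈ Icc 0 T, DifferentiableAt ℝ (φ τ) y := by
  obtain ⟨W, hW0, hW, hD⟩ := flow_deriv_aux hX h0 hφ y hT
  refine ⟨fun τ hτ => ?_, fun τ hτ => (hD τ hτ).differentiableAt⟩
  rw [(hD τ hτ).fderiv]
  exact (hW τ hτ).congr (fun s hs => (hD s hs).fderiv) (hD τ hτ).fderiv

theorem flow_cont [CompleteSpace E] [ProperSpace E] {X : E → E} (hX : ContDiff ℝ 1 X)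
    {z : ℝ → E} {W : ℝ → E →L[ℝ] E} {T : ℝ} (hT : 0 ≤ T)
    (hz : ∀ τ ∈ Icc 0 T, HasDerivWithinAt z (X (z τ)) (Icc 0 T) τ)
    (hW : ∀ τ ∈ Icc 0 T, HasDerivWithinAt W (fderiv ℝ X (z τ) ∘L W τ) (Icc 0 T) τ)
    {η' : ℝ} (hη' : 0 < η') :
    ∃ η > 0, ∃ Q : Set E, IsCompact Q ∧ ∀ (X1 : E → E) (z1 : ℝ → E) (W1 : ℝ → E →L[ℝ] E),
      (∀ τ ∈ Icc 0 T, HasDerivWithinAt z1 (X1 (z1 τ)) (Icc 0 T) τ) →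
      (∀ τ ∈ Icc 0 T, HasDerivWithinAt W1 (fderiv ℝ X1 (z1 τ) ∘L W1 τ) (Icc 0 T) τ) →
      W1 0 = W 0 → ‖z1 0 - z 0‖ ≤ η →
      (∀ w ∈ Q, ‖X1 w - X w‖ ≤ η ∧ ‖fderiv ℝ X1 w - fderiv ℝ X w‖ ≤ η) →
      ‖W1 T - W T‖ ≤ η' := by
  have hzc : ContinuousOn z (Icc 0 T) := fun τ hτ => (hz τ hτ).continuousWithinAt
  have hWc : ContinuousOn W (Icc 0 T) := fun τ hτ => (hW τ hτ).continuousWithinAt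
  have hAc : ContinuousOn (fun τ => fderiv ℝ X (z τ)) (Icc 0 T) :=
    (hX.continuous_fderiv one_ne_zero).comp_continuousOn hzc
  obtain ⟨K, hK⟩ := isCompact_Icc.exists_bound_of_continuousOn hAc
  obtain ⟨M, hM⟩ := isCompact_Icc.exists_bound_of_continuousOn hWc
  have hK0 : 0 ≤ K := (norm_nonneg _).trans (hK 0 ⟨le_rfl, hT⟩)
  have hM0 : 0 ≤ M := (norm_nonneg _).trans (hM 0 ⟨le_rfl, hT⟩)
  set C1 := Real.exp ((K + 1 + 1) * T) with hC1
  set C2 := Real.exp ((K + 2 + 1) * T) with hC2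
  have hC1p : 0 < C1 := Real.exp_pos _
  have hC2p : 0 < C2 := Real.exp_pos _
  set ε := min 1 (η' / C2 / (4 * (M + 1))) with hε
  have hεp : 0 < ε := by positivity
  have hε2 : 2 * ε * M < η' / C2 := by
    have : ε ≤ η' / C2 / (4 * (M + 1)) := min_le_right _ _
    rw [le_div_iff₀ (by positivity)] at this
    nlinarith [mul_nonneg hεp.le hM0]
  obtain ⟨δ', hδ', H'⟩ := unif_deriv hX hzc hεp
  set δ := min δ' 1 with hδd
  have hδ : 0 < δ := by positivity
  have H : ∀ τ ∈ Icc 0 T, ∀ w, ‖w - z τ‖ ≤ δ →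
      ‖fderiv ℝ X w - fderiv ℝ X (z τ)‖ ≤ ε ∧
      ‖X w - X (z τ) - fderiv ℝ X (z τ) (w - z τ)‖ ≤ ε * ‖w - z τ‖ :=
    fun τ hτ w hw => H' τ hτ w (hw.trans (min_le_left _ _))
  refine ⟨min ε (δ / (2 * C1)), by positivity, cthickening 1 (z '' Icc 0 T),
    (isCompact_Icc.image_of_continuousOn hzc).cthickening, ?_⟩
  set η := min ε (δ / (2 * C1)) with hη
  have hηp : 0 < η := by positivity
  have hη1 : η ≤ ε := min_le_left _ _
  have hη2 : 2 * η * C1 ≤ δ := by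
    have : η ≤ δ / (2 * C1) := min_le_right _ _
    rw [le_div_iff₀ (by positivity)] at this
    linarith
  intro X1 z1 W1 hz1 hW1 h0 hz0 hX1
  have hQ : ∀ τ ∈ Icc 0 T, ∀ w, ‖w - z τ‖ ≤ δ → w ∈ cthickening 1 (z '' Icc 0 T) := by
    intro τ hτ w hw
    refine mem_cthickening_of_dist_le w (z τ) _ _ (mem_image_of_mem z hτ) ?_
    rw [dist_eq_norm]; exact hw.trans (min_le_right _ _)
  have hd : ∀ τ ∈ Icc 0 T, HasDerivWithinAt (fun τ => z1 τ - z τ)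
      (X1 (z1 τ) - X (z τ)) (Icc 0 T) τ := fun τ hτ => (hz1 τ hτ).sub (hz τ hτ)
  have B1 := fence_bound (m := 2 * η) (K := K + 1) (η := η) hd (by linarith) hηp.le (by linarith)
    (by linarith) (by
      intro τ hτ hle
      have hτ' : τ ∈ Icc 0 T := ⟨hτ.1, hτ.2.le⟩
      have hle' := hle.trans hη2
      have h1 := (H τ hτ' _ hle').2
      have h1' : ‖X (z1 τ) - X (z τ) - fderiv ℝ X (z τ) (z1 τ - z τ)‖ ≤ 1 * ‖z1 τ - z τ‖ :=
        h1.trans (mul_le_mul_of_nonneg_right (min_le_left _ _) (norm_nonneg _))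
      have h2 := (fderiv ℝ X (z τ)).le_of_opNorm_le (hK τ hτ') (z1 τ - z τ)
      have h4 := (hX1 _ (hQ τ hτ' _ hle')).1
      have h3 := norm_le_norm_sub_add (X (z1 τ) - X (z τ))
        (fderiv ℝ X (z τ) (z1 τ - z τ))
      have h5 := norm_sub_le_norm_sub_add_norm_sub (X1 (z1 τ)) (X (z1 τ)) (X (z τ))
      linarith)
  have hD : ∀ τ ∈ Icc 0 T, HasDerivWithinAt (fun τ => W1 τ - W τ)
      (fderiv ℝ X1 (z1 τ) ∘L W1 τ - fderiv ℝ X (z τ) ∘L W τ) (Icc 0 T) τ :=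
    fun τ hτ => (hW1 τ hτ).sub (hW τ hτ)
  have B2 := fence_bound (m := η' / C2) (K := K + 2) (η := 2 * ε * M) hD (by linarith)
    (by positivity) hε2 (by rw [h0]; simp; positivity) (by
      intro τ hτ _
      have hτ' : τ ∈ Icc 0 T := ⟨hτ.1, hτ.2.le⟩
      have hle := (B1 τ hτ').trans hη2
      have h1 := (H τ hτ' _ hle).1
      have h4 := (hX1 _ (hQ τ hτ' _ hle)).2
      have h5 := norm_sub_le_norm_sub_add_norm_sub (fderiv ℝ X1 (z1 τ)) (fderiv ℝ X (z1 τ))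
        (fderiv ℝ X (z τ))
      have h6 : ‖fderiv ℝ X1 (z1 τ) - fderiv ℝ X (z τ)‖ ≤ 2 * ε := by linarith
      have h7 : ‖fderiv ℝ X1 (z1 τ)‖ ≤ K + 2 := by
        have := norm_le_norm_sub_add (fderiv ℝ X1 (z1 τ)) (fderiv ℝ X (z τ))
        have := hK τ hτ'
        have : ε ≤ 1 := min_le_left _ _
        linarith
      have e : fderiv ℝ X1 (z1 τ) ∘L W1 τ - fderiv ℝ X (z τ) ∘L W τ =
        fderiv ℝ X1 (z1 τ) ∘L (W1 τ - W τ) +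
        (fderiv ℝ X1 (z1 τ) - fderiv ℝ X (z τ)) ∘L W τ := by
        simp only [ContinuousLinearMap.comp_sub, ContinuousLinearMap.sub_comp]; abel
      rw [e]
      refine (norm_add_le _ _).trans (add_le_add ?_ ?_)
      · exact (ContinuousLinearMap.opNorm_comp_le _ _).trans
          (mul_le_mul_of_nonneg_right h7 (norm_nonneg _))
      · exact (ContinuousLinearMap.opNorm_comp_le _ _).trans
          (mul_le_mul h6 (hM τ hτ') (norm_nonneg _) (by positivity)))
  have := B2 T ⟨hT, le_rfl⟩
  rwa [← hC2, div_mul_cancel₀ _ hC2p.ne'] at this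

end flow
/-- The standard symplectic form. -/
def omg {d : ℕ} (u v : Phase d) : ℝ := ⟪u.1, v.2⟫ - ⟪u.2, v.1⟫

/-- The symplectic gradient operator. -/
def JJ (d : ℕ) : (Phase d →L[ℝ] ℝ) →L[ℝ] Phase d :=
  LinearMap.toContinuousLinearMap
    { toFun := fun l => ((InnerProductSpace.toDual ℝ (Euc d)).symm
          (l ∘L ContinuousLinearMap.inr ℝ (Euc d) (Euc d)),
        -(InnerProductSpace.toDual ℝ (Euc d)).symm
          (l ∘L ContinuousLinearMap.inl ℝ (Euc d) (Euc d)))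
      map_add' := by
        intro l m
        simp only [ContinuousLinearMap.add_comp, map_add, neg_add, Prod.mk_add_mk]
      map_smul' := by
        intro r l
        simp only [ContinuousLinearMap.smul_comp, map_smulₛₗ, Prod.smul_mk, smul_neg,
          RingHom.id_apply, conj_trivial] }

/-- The projection on the vertical. -/
def PP (d : ℕ) : Phase d →L[ℝ] Phase d :=
  ContinuousLinearMap.inr ℝ (Euc d) (Euc d) ∘L ContinuousLinearMap.snd ℝ (Euc d) (Euc d)

theorem JJ_apply {d : ℕ} (l : Phase d →L[ℝ] ℝ) :
    JJ d l = ((InnerProductSpace.toDual ℝ (Euc d)).symm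
          (l ∘L ContinuousLinearMap.inr ℝ (Euc d) (Euc d)),
        -(InnerProductSpace.toDual ℝ (Euc d)).symm
          (l ∘L ContinuousLinearMap.inl ℝ (Euc d) (Euc d))) := rfl

theorem PP_apply {d : ℕ} (u : Phase d) : PP d u = (0, u.2) := rfl

theorem JJ_fst {d : ℕ} (l : Phase d →L[ℝ] ℝ) (w : Euc d) : ⟪(JJ d l).1, w⟫ = l (0, w) := by
  rw [JJ_apply]
  simp [InnerProductSpace.toDual_symm_apply]

theorem JJ_snd {d : ℕ} (l : Phase d →L[ℝ] ℝ) (w : Euc d) : ⟪(JJ d l).2, w⟫ = -l (w, 0) := by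
  rw [JJ_apply]
  simp [InnerProductSpace.toDual_symm_apply, inner_neg_left]

theorem omg_JJ {d : ℕ} (l : Phase d →L[ℝ] ℝ) (v : Phase d) : omg (JJ d l) v = l v := by
  unfold omg
  rw [JJ_fst, JJ_snd, sub_neg_eq_add, ← map_add]
  simp

theorem omg_antisymm {d : ℕ} (u v : Phase d) : omg u v = - omg v u := by
  unfold omg
  rw [real_inner_comm u.1, real_inner_comm u.2]; ring

theorem hamVF_eq {d : ℕ} {H : Phase d → ℝ} (hH : ContDiff ℝ 2 H) (lam : ℝ) :
    hamVF H lam = fun x => JJ d (fderiv ℝ H x) - lam • PP d x := by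
  have hd : Differentiable ℝ H := hH.differentiable two_ne_zero
  funext x
  obtain ⟨q, p⟩ := x
  have h1 : HasFDerivAt (fun p' => H (q, p')) (fderiv ℝ H (q, p) ∘L
      ContinuousLinearMap.inr ℝ (Euc d) (Euc d)) p :=
    (hd (q, p)).hasFDerivAt.comp p (hasFDerivAt_prodMk_right q p)
  have h2 : HasFDerivAt (fun q' => H (q', p)) (fderiv ℝ H (q, p) ∘L
      ContinuousLinearMap.inl ℝ (Euc d) (Euc d)) q :=
    (hd (q, p)).hasFDerivAt.comp q (hasFDerivAt_prodMk_left q p)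
  simp only [hamVF, gradient, h1.fderiv, h2.fderiv, JJ_apply, PP_apply]
  ext <;> simp

theorem hamVF_contDiff {d : ℕ} {H : Phase d → ℝ} (hH : ContDiff ℝ 2 H) (lam : ℝ) :
    ContDiff ℝ 1 (hamVF H lam) := by
  rw [hamVF_eq hH]
  have : ContDiff ℝ 1 (fderiv ℝ H) := hH.fderiv_right (by norm_num)
  exact ((JJ d).contDiff.comp this).sub ((PP d).contDiff.const_smul lam)

theorem hamVF_fderiv {d : ℕ} {H : Phase d → ℝ} (hH : ContDiff ℝ 2 H) (lam : ℝ) (x : Phase d) :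
    fderiv ℝ (hamVF H lam) x = JJ d ∘L fderiv ℝ (fderiv ℝ H) x - lam • PP d := by
  rw [hamVF_eq hH]
  have h1 : ContDiff ℝ 1 (fderiv ℝ H) := hH.fderiv_right (by norm_num)
  have h2 : HasFDerivAt (fderiv ℝ H) _ x := (h1.differentiable one_ne_zero x).hasFDerivAt
  exact (((JJ d).hasFDerivAt.comp x h2).fun_sub ((PP d).hasFDerivAt.const_smul lam)).fderiv

theorem conf_identity {d : ℕ} {H : Phase d → ℝ} (hH : ContDiff ℝ 2 H) (lam : ℝ) (x u v : Phase d) :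
    omg (fderiv ℝ (hamVF H lam) x u) v + omg u (fderiv ℝ (hamVF H lam) x v) = - lam * omg u v := by
  rw [hamVF_fderiv hH]
  have hs : fderiv ℝ (fderiv ℝ H) x u v = fderiv ℝ (fderiv ℝ H) x v u :=
    (hH.contDiffAt.isSymmSndFDerivAt (by simp)) u v
  have e1 := omg_JJ (fderiv ℝ (fderiv ℝ H) x u) v
  have e2 := omg_JJ (fderiv ℝ (fderiv ℝ H) x v) u
  rw [omg_antisymm u]
  simp only [sub_apply, smul_apply,
    ContinuousLinearMap.comp_apply, PP_apply]
  simp only [omg] at e1 e2 ⊢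
  simp only [Prod.fst_sub, Prod.snd_sub, Prod.smul_fst, Prod.smul_snd, inner_sub_left,
    inner_smul_left, smul_zero, sub_zero]
  have i1 := real_inner_comm u.1 v.2
  simp only [conj_trivial]
  rw [i1]
  linear_combination e1 - e2 + hs

theorem fiber_nonneg {d : ℕ} {H : Phase d → ℝ} (hH : ContDiff ℝ 2 H) (hc : ConvexInFiber H)
    (x : Phase d) (w : Euc d) : 0 ≤ fderiv ℝ (fderiv ℝ H) x (0, w) (0, w) := by
  by_cases hw : w = 0
  · subst hw
    simp [← Prod.zero_eq_mk]
  have hd : Differentiable ℝ H := hH.differentiable two_ne_zero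
  have hd1 : ContDiff ℝ 1 (fderiv ℝ H) := hH.fderiv_right (by norm_num)
  obtain ⟨q, p⟩ := x
  have h := hc q p w hw
  rw [iteratedFDeriv_two_apply] at h
  have h1 : fderiv ℝ (fun p' => H (q, p')) = fun p' => (fderiv ℝ H (q, p')) ∘L
      ContinuousLinearMap.inr ℝ (Euc d) (Euc d) := by
    funext p'
    exact ((hd (q, p')).hasFDerivAt.comp p' (hasFDerivAt_prodMk_right q p')).fderiv
  have h2 : HasFDerivAt (fun p' => fderiv ℝ H (q, p')) (fderiv ℝ (fderiv ℝ H) (q, p) ∘L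
      ContinuousLinearMap.inr ℝ (Euc d) (Euc d)) p :=
    (hd1.differentiable one_ne_zero (q, p)).hasFDerivAt.comp p (hasFDerivAt_prodMk_right q p)
  have h3 := h2.clm_comp (hasFDerivAt_const (ContinuousLinearMap.inr ℝ (Euc d) (Euc d)) p)
  rw [h1, h3.fderiv] at h
  simpa using h.le

/-- data of the backward flow -/
theorem back_flow {d : ℕ} {H : Phase d → ℝ} (hH : ContDiff ℝ 2 H) {lam : ℝ}
    {φ : ℝ → Phase d → Phase d} (hφ : IsConformalFlow H lam φ) (y : Phase d) {T : ℝ} (hT : 0 ≤ T) :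
    (∀ τ ∈ Icc 0 T, HasDerivWithinAt (fun τ => fderiv ℝ (φ (-τ)) y)
        (fderiv ℝ (fun x => -hamVF H lam x) (φ (-τ) y) ∘L fderiv ℝ (φ (-τ)) y) (Icc 0 T) τ) ∧
      ∀ τ ∈ Icc 0 T, DifferentiableAt ℝ (φ (-τ)) y := by
  refine flow_deriv (X := fun x => -hamVF H lam x) (φ := fun τ => φ (-τ))
    (hamVF_contDiff hH lam).neg (by simpa using hφ.1) ?_ y hT
  intro x t
  have := (hφ.2.2 x (-t)).scomp t (hasDerivAt_neg t)
  rw [neg_one_smul] at this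
  exact this

theorem back_traj {d : ℕ} {H : Phase d → ℝ} {lam : ℝ}
    {φ : ℝ → Phase d → Phase d} (hφ : IsConformalFlow H lam φ) (y : Phase d) (t : ℝ) :
    HasDerivAt (fun τ => φ (-τ) y) (-hamVF H lam (φ (-t) y)) t := by
  have := (hφ.2.2 y (-t)).scomp t (hasDerivAt_neg t)
  rw [neg_one_smul] at this
  exact this

theorem back_zero {d : ℕ} {H : Phase d → ℝ} {lam : ℝ}
    {φ : ℝ → Phase d → Phase d} (hφ : IsConformalFlow H lam φ) (y : Phase d) :
    fderiv ℝ (φ (-0)) y = ContinuousLinearMap.id ℝ (Phase d) := by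
  have : φ (-0) = id := by funext x; simpa using hφ.1 x
  rw [this, fderiv_id]

theorem mem_push {d : ℕ} {H : Phase d → ℝ} (hH : ContDiff ℝ 2 H) {lam : ℝ}
    {φ : ℝ → Phase d → Phase d} (hφ : IsConformalFlow H lam φ) (y : Phase d) {t : ℝ} (ht : 0 ≤ t)
    (u : Phase d) :
    u ∈ pushV φ t (φ (-t) y) ↔ (fderiv ℝ (φ (-t)) y u).1 = 0 := by
  have d1 : DifferentiableAt ℝ (φ (-t)) y := (back_flow hH hφ y ht).2 t ⟨ht, le_rfl⟩
  have d2 : ∀ z, DifferentiableAt ℝ (φ t) z := fun z =>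
    (flow_deriv (hamVF_contDiff hH lam) hφ.1 hφ.2.2 z ht).2 t ⟨ht, le_rfl⟩
  have e1 : φ t ∘ φ (-t) = id := by
    funext z; simp [hφ.2.1, hφ.1]
  have e2 : φ (-t) ∘ φ t = id := by
    funext z; simp [hφ.2.1, hφ.1]
  have c1 : fderiv ℝ (φ t) (φ (-t) y) ∘L fderiv ℝ (φ (-t)) y = ContinuousLinearMap.id ℝ _ := by
    rw [← fderiv_comp y (d2 _) d1, e1, fderiv_id]
  have e3 : φ t (φ (-t) y) = y := congrFun e1 y
  have c2 : fderiv ℝ (φ (-t)) y ∘L fderiv ℝ (φ t) (φ (-t) y) = ContinuousLinearMap.id ℝ _ := by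
    have d1' : DifferentiableAt ℝ (φ (-t)) (φ t (φ (-t) y)) := by rw [e3]; exact d1
    have := fderiv_comp (φ (-t) y) d1' (d2 _)
    rw [e2, fderiv_id, e3] at this
    exact this.symm
  unfold pushV Vert
  simp only [Submodule.mem_map, Submodule.mem_prod, Submodule.mem_bot, Submodule.mem_top, and_true,
    ContinuousLinearMap.coe_coe]
  constructor
  · rintro ⟨v, hv, rfl⟩
    have := congrArg (fun L => L v) c2
    simp only [ContinuousLinearMap.comp_apply, ContinuousLinearMap.id_apply] at this
    rw [this, hv]
  · intro h
    refine ⟨_, h, ?_⟩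
    have := congrArg (fun L => L u) c1
    simpa using this

theorem omg_back {d : ℕ} {H : Phase d → ℝ} (hH : ContDiff ℝ 2 H) {lam : ℝ}
    {φ : ℝ → Phase d → Phase d} (hφ : IsConformalFlow H lam φ) (y : Phase d) {t : ℝ} (ht : 0 ≤ t)
    (u v : Phase d) :
    omg (fderiv ℝ (φ (-t)) y u) (fderiv ℝ (φ (-t)) y v) = Real.exp (lam * t) * omg u v := by
  have hW := (back_flow hH hφ y ht).1
  set W := fun τ => fderiv ℝ (φ (-τ)) y with hWd
  have hder : ∀ τ ∈ Icc 0 t, HasDerivWithinAt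
      (fun τ => Real.exp (-lam * τ) * omg (W τ u) (W τ v)) 0 (Icc 0 t) τ := by
    intro τ hτ
    have hu : HasDerivWithinAt (fun τ => W τ u)
        (-fderiv ℝ (hamVF H lam) (φ (-τ) y) (W τ u)) (Icc 0 t) τ := by
      have := (hW τ hτ).clm_apply (hasDerivWithinAt_const τ (Icc 0 t) u)
      simpa [fderiv_fun_neg] using this
    have hv : HasDerivWithinAt (fun τ => W τ v)
        (-fderiv ℝ (hamVF H lam) (φ (-τ) y) (W τ v)) (Icc 0 t) τ := by
      have := (hW τ hτ).clm_apply (hasDerivWithinAt_const τ (Icc 0 t) v)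
      simpa [fderiv_fun_neg] using this
    have hu1 := (ContinuousLinearMap.fst ℝ (Euc d) (Euc d)).hasFDerivAt.comp_hasDerivWithinAt τ hu
    have hu2 := (ContinuousLinearMap.snd ℝ (Euc d) (Euc d)).hasFDerivAt.comp_hasDerivWithinAt τ hu
    have hv1 := (ContinuousLinearMap.fst ℝ (Euc d) (Euc d)).hasFDerivAt.comp_hasDerivWithinAt τ hv
    have hv2 := (ContinuousLinearMap.snd ℝ (Euc d) (Euc d)).hasFDerivAt.comp_hasDerivWithinAt τ hv
    have ho := (hu1.inner ℝ hv2).fun_sub (hu2.inner ℝ hv1)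
    have hexp : HasDerivWithinAt (fun τ => Real.exp (-lam * τ))
        (Real.exp (-lam * τ) * (-lam)) (Icc 0 t) τ := by
      have := ((hasDerivAt_id τ).const_mul (-lam)).exp
      simpa using this.hasDerivWithinAt
    have hall := hexp.fun_mul ho
    refine hall.congr_deriv ?_
    have key := conf_identity hH lam (φ (-τ) y) (W τ u) (W τ v)
    simp only [omg] at key
    simp only [Function.comp_apply, ContinuousLinearMap.coe_fst', ContinuousLinearMap.coe_snd',
      Prod.fst_neg, Prod.snd_neg, inner_neg_left, inner_neg_right]
    linear_combination (-Real.exp (-lam * τ)) * key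
  have := constant_of_has_deriv_right_zero (fun τ hτ => (hder τ hτ).continuousWithinAt)
    (fun τ hτ => (hder τ ⟨hτ.1, hτ.2.le⟩).mono_of_mem_nhdsWithin (Icc_mem_nhdsGE_of_mem hτ))
    t ⟨ht, le_rfl⟩
  have h0 : W 0 = ContinuousLinearMap.id ℝ (Phase d) := back_zero hφ y
  simp only [h0, mul_zero, Real.exp_zero, one_mul, ContinuousLinearMap.id_apply] at this
  rw [← this, ← mul_assoc, ← Real.exp_add]
  simp [hWd]

/-- The height of the pull-back of the vertical by `M`. -/
def hmap {d : ℕ} (M : Phase d →L[ℝ] Phase d) : Euc d →L[ℝ] Euc d :=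
  -(Ring.inverse (ContinuousLinearMap.fst ℝ (Euc d) (Euc d) ∘L M ∘L
      ContinuousLinearMap.inr ℝ (Euc d) (Euc d)) *
    (ContinuousLinearMap.fst ℝ (Euc d) (Euc d) ∘L M ∘L ContinuousLinearMap.inl ℝ (Euc d) (Euc d)))

/-- The off-diagonal block. -/
def bblk {d : ℕ} (M : Phase d →L[ℝ] Phase d) : Euc d →L[ℝ] Euc d :=
  ContinuousLinearMap.fst ℝ (Euc d) (Euc d) ∘L M ∘L ContinuousLinearMap.inr ℝ (Euc d) (Euc d)

theorem hmap_spec {d : ℕ} {M : Phase d →L[ℝ] Phase d} (hM : IsUnit (bblk M)) (v p : Euc d) :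
    (M (v, p)).1 = 0 ↔ p = hmap M v := by
  have e : (M (v, p)).1 = (M (v, 0)).1 + bblk M p := by
    have : ((v, p) : Phase d) = (v, 0) + (0, p) := by simp
    rw [this, map_add]; rfl
  have e1 : ∀ w, Ring.inverse (bblk M) (bblk M w) = w := fun w => by
    have := congrArg (fun L : Euc d →L[ℝ] Euc d => L w) (Ring.inverse_mul_cancel _ hM)
    exact this
  have e2 : ∀ w, bblk M (Ring.inverse (bblk M) w) = w := fun w => by
    have := congrArg (fun L : Euc d →L[ℝ] Euc d => L w) (Ring.mul_inverse_cancel _ hM)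
    exact this
  have e3 : hmap M v = - Ring.inverse (bblk M) (M (v, 0)).1 := rfl
  rw [e, e3]
  constructor
  · intro h
    have := e1 p
    rw [← this, eq_neg_of_add_eq_zero_right h, map_neg]
  · intro h
    rw [h, map_neg, e2, add_neg_cancel]

theorem bblk_cont {d : ℕ} : Continuous (bblk (d := d)) := by
  unfold bblk; fun_prop

theorem hmap_diff {d : ℕ} {M : Phase d →L[ℝ] Phase d} (hM : IsUnit (bblk M)) :
    DifferentiableAt ℝ (hmap (d := d)) M := by
  have h1 : DifferentiableAt ℝ (fun M : Phase d →L[ℝ] Phase d => bblk M) M := by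
    unfold bblk; fun_prop
  have h2 : DifferentiableAt ℝ (fun M : Phase d →L[ℝ] Phase d => Ring.inverse (bblk M)) M :=
    (differentiableAt_inverse hM).comp M h1
  have h3 : DifferentiableAt ℝ (fun M : Phase d →L[ℝ] Phase d =>
    ContinuousLinearMap.fst ℝ (Euc d) (Euc d) ∘L M ∘L
      ContinuousLinearMap.inl ℝ (Euc d) (Euc d)) M := by fun_prop
  exact (h2.mul h3).neg

theorem isUnit_of_noConj {d : ℕ} {H : Phase d → ℝ} (hH : ContDiff ℝ 2 H) {lam : ℝ}
    {φ : ℝ → Phase d → Phase d} (hφ : IsConformalFlow H lam φ) (y : Phase d) {t s : ℝ}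
    (hs : 0 < s) (hst : s ≤ t) (hn : NoConjPts φ y (uIcc (-t) 0)) :
    IsUnit (bblk (fderiv ℝ (φ (-s)) y)) := by
  have h := hn (-s) (by rw [uIcc_of_le (by linarith)]; constructor <;> linarith) 0
    (by rw [uIcc_of_le (by linarith)]; constructor <;> linarith) (by linarith)
  rw [zero_sub, neg_neg] at h
  rw [ContinuousLinearMap.isUnit_iff_bijective]
  have hinj : Function.Injective (bblk (fderiv ℝ (φ (-s)) y)) := by
    rw [injective_iff_map_eq_zero]
    intro p hp
    have hmem : ((0, p) : Phase d) ∈ pushV φ s (φ (-s) y) ⊓ Vert d := by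
      refine ⟨(mem_push hH hφ y hs.le _).2 hp, ?_⟩
      simp [Vert]
    rw [h] at hmem
    simpa using hmem
  exact ⟨hinj, (LinearMap.injective_iff_surjective
    (f := (bblk (fderiv ℝ (φ (-s)) y)).toLinearMap)).1 hinj⟩

theorem hGreen_eq {d : ℕ} {H : Phase d → ℝ} (hH : ContDiff ℝ 2 H) {lam : ℝ}
    {φ : ℝ → Phase d → Phase d} (hφ : IsConformalFlow H lam φ) (y : Phase d) {t : ℝ}
    (ht : 0 ≤ t) (hu : IsUnit (bblk (fderiv ℝ (φ (-t)) y))) :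
    hGreenPlus φ t y = hmap (fderiv ℝ (φ (-t)) y) := by
  set M := fderiv ℝ (φ (-t)) y with hM
  have hheight : IsHeight (pushV φ t (φ (-t) y)) (hmap M) := by
    constructor
    · intro v w
      have h1 := (hmap_spec hu v _).2 rfl
      have h2 := (hmap_spec hu w _).2 rfl
      have h3 := omg_back hH hφ y ht (v, hmap M v) (w, hmap M w)
      rw [← hM] at h3
      unfold omg at h3
      rw [h1, h2] at h3
      simp only [inner_zero_left, inner_zero_right, sub_zero] at h3
      have := (mul_eq_zero.1 h3.symm).resolve_left (Real.exp_pos _).ne'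
      linarith
    · ext ⟨v, p⟩
      rw [mem_push hH hφ y ht, ← hM, hmap_spec hu, LinearMap.mem_graph_iff]
      rfl
  have hex : ∃ S, IsHeight (pushV φ t (φ (-t) y)) S := ⟨_, hheight⟩
  unfold hGreenPlus heightOf
  rw [dif_pos hex]
  have h1 := hheight.2.symm.trans hex.choose_spec.2
  ext1 v
  have h2 : ((v, hmap M v) : Phase d) ∈ LinearMap.graph (hmap M : Euc d →ₗ[ℝ] Euc d) := by
    rw [LinearMap.mem_graph_iff]; rfl
  rw [h1, LinearMap.mem_graph_iff] at h2
  exact h2.symm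

theorem green_mono {d : ℕ} {H : Phase d → ℝ} (hH : ContDiff ℝ 2 H) (hc : ConvexInFiber H) {lam : ℝ}
    {φ : ℝ → Phase d → Phase d} (hφ : IsConformalFlow H lam φ) (y : Phase d) {s t : ℝ}
    (hs : 0 < s) (hst : s ≤ t) (hu : ∀ τ ∈ Icc s t, IsUnit (bblk (fderiv ℝ (φ (-τ)) y))) :
    SymLE (hmap (fderiv ℝ (φ (-t)) y)) (hmap (fderiv ℝ (φ (-s)) y)) := by
  intro v
  have hW := (back_flow hH hφ y (hs.le.trans hst)).1
  set W := fun τ => fderiv ℝ (φ (-τ)) y with hWd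
  have hsub : Icc s t ⊆ Icc 0 t := Icc_subset_Icc_left hs.le
  have hcont : ContinuousOn (fun τ => hmap (W τ)) (Icc s t) := by
    intro τ hτ
    have hu1 : ContinuousAt (hmap (d := d)) (W τ) := (hmap_diff (hu τ hτ)).continuousAt
    exact ContinuousAt.comp_continuousWithinAt (f := W) hu1
      ((hW τ (hsub hτ)).continuousWithinAt.mono hsub)
  have hWat : ∀ τ ∈ Ioo s t, HasDerivAt W
      (-(fderiv ℝ (hamVF H lam) (φ (-τ) y) ∘L W τ)) τ := by
    intro τ hτ
    have := (hW τ (hsub ⟨hτ.1.le, hτ.2.le⟩)).hasDerivAt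
      (Icc_mem_nhds (hs.trans hτ.1) hτ.2)
    simpa [fderiv_fun_neg] using this
  have hpat : ∀ τ ∈ Ioo s t, ∃ p', HasDerivAt (fun τ => hmap (W τ) v) p' τ ∧ ⟪p', v⟫ ≤ 0 := by
    intro τ hτ
    have hu1 : DifferentiableAt ℝ (hmap (d := d)) (W τ) := hmap_diff (hu τ ⟨hτ.1.le, hτ.2.le⟩)
    have hd : DifferentiableAt ℝ (fun τ => hmap (W τ)) τ :=
      DifferentiableAt.comp (f := W) (g := hmap (d := d)) τ hu1 (hWat τ hτ).differentiableAt
    have hd2 : DifferentiableAt ℝ (fun τ => hmap (W τ) v) τ :=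
      hd.clm_apply (differentiableAt_const v)
    obtain ⟨p', hp'⟩ : ∃ p', HasDerivAt (fun τ => hmap (W τ) v) p' τ := ⟨_, hd2.hasDerivAt⟩
    refine ⟨p', hp', ?_⟩
    have hcurve : HasDerivAt (fun τ => W τ (v, hmap (W τ) v))
        (-fderiv ℝ (hamVF H lam) (φ (-τ) y) (W τ (v, hmap (W τ) v)) + W τ (0, p')) τ := by
      have := (hWat τ hτ).clm_apply ((hasDerivAt_const τ v).prodMk hp')
      simpa using this
    have hfst := (ContinuousLinearMap.fst ℝ (Euc d) (Euc d)).hasFDerivAt.comp_hasDerivAt τ hcurve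
    have hz : ∀ᶠ σ in nhds τ, (ContinuousLinearMap.fst ℝ (Euc d) (Euc d) ∘
        (fun τ => W τ (v, hmap (W τ) v))) σ = 0 := by
      filter_upwards [Icc_mem_nhds hτ.1 hτ.2] with σ hσ
      exact (hmap_spec (hu σ hσ) v _).2 rfl
    have hzero := (hasDerivAt_const τ (0 : Euc d)).congr_of_eventuallyEq hz
    have heq := hfst.unique hzero
    have hz0 : (W τ (v, hmap (W τ) v)).1 = 0 :=
      (hmap_spec (hu τ ⟨hτ.1.le, hτ.2.le⟩) v _).2 rfl
    obtain ⟨w, hw⟩ : ∃ w, W τ (v, hmap (W τ) v) = (0, w) := ⟨_, Prod.ext hz0 rfl⟩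
    rw [hw] at heq
    have heq2 : (W τ (0, p')).1 = (fderiv ℝ (hamVF H lam) (φ (-τ) y) (0, w)).1 := by
      simp only [ContinuousLinearMap.coe_fst', Prod.fst_add, Prod.fst_neg] at heq
      exact (neg_add_eq_zero.1 heq).symm
    have ho := omg_back hH hφ y (hs.trans hτ.1).le (v, hmap (W τ) v) (0, p')
    change omg (W τ (v, hmap (W τ) v)) (W τ (0, p')) = _ at ho
    rw [hw] at ho
    simp only [omg, heq2, inner_zero_left, inner_zero_right, zero_sub, sub_zero] at ho
    have hpos := fiber_nonneg hH hc (φ (-τ) y) w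
    have hj : ⟪w, (fderiv ℝ (hamVF H lam) (φ (-τ) y) (0, w)).1⟫ =
        fderiv ℝ (fderiv ℝ H) (φ (-τ) y) (0, w) (0, w) := by
      rw [hamVF_fderiv hH, ← JJ_fst, real_inner_comm]
      simp [PP_apply]
    rw [hj] at ho
    rw [real_inner_comm]
    have hexp := Real.exp_pos (lam * τ)
    by_contra hcon
    push Not at hcon
    have := mul_pos hexp hcon
    linarith
  have hanti : AntitoneOn (fun τ => ⟪hmap (W τ) v, v⟫) (Icc s t) := by
    refine antitoneOn_of_deriv_nonpos (convex_Icc s t) ?_ ?_ ?_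
    · exact (hcont.clm_apply continuousOn_const).inner continuousOn_const
    · rw [interior_Icc]
      intro τ hτ
      obtain ⟨p', hp', _⟩ := hpat τ hτ
      exact (hp'.inner ℝ (hasDerivAt_const τ v)).differentiableAt.differentiableWithinAt
    · rw [interior_Icc]
      intro τ hτ
      obtain ⟨p', hp', hle⟩ := hpat τ hτ
      rw [(hp'.inner ℝ (hasDerivAt_const τ v)).deriv]
      simpa using hle
  exact hanti ⟨le_rfl, hst⟩ ⟨hst, le_rfl⟩ hst

theorem fderiv_close {d : ℕ} {H1 H0 : Phase d → ℝ} (h1 : ContDiff ℝ 2 H1) (h0 : ContDiff ℝ 2 H0)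
    {x : Phase d} {e : ℝ}
    (h : ∀ j : ℕ, j ≤ 2 → ‖iteratedFDeriv ℝ j H1 x - iteratedFDeriv ℝ j H0 x‖ ≤ e) :
    ‖fderiv ℝ H1 x - fderiv ℝ H0 x‖ ≤ e ∧
      ‖fderiv ℝ (fderiv ℝ H1) x - fderiv ℝ (fderiv ℝ H0) x‖ ≤ e := by
  have d1 : Differentiable ℝ H1 := h1.differentiable two_ne_zero
  have d0 : Differentiable ℝ H0 := h0.differentiable two_ne_zero
  have dd1 : Differentiable ℝ (fderiv ℝ H1) :=
    (h1.fderiv_right (m := 1) (by norm_num)).differentiable one_ne_zero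
  have dd0 : Differentiable ℝ (fderiv ℝ H0) :=
    (h0.fderiv_right (m := 1) (by norm_num)).differentiable one_ne_zero
  have hf : fderiv ℝ (H1 - H0) = fderiv ℝ H1 - fderiv ℝ H0 := by
    funext z; exact fderiv_sub (d1 z) (d0 z)
  constructor
  · have := h 1 (by norm_num)
    rwa [← iteratedFDeriv_sub_apply (h1.contDiffAt.of_le (by norm_num))
      (h0.contDiffAt.of_le (by norm_num)),
      norm_iteratedFDeriv_one, hf] at this
  · have := h 2 le_rfl
    rw [← iteratedFDeriv_sub_apply h1.contDiffAt h0.contDiffAt] at this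
    change ‖iteratedFDeriv ℝ (1 + 1) (H1 - H0) x‖ ≤ e at this
    rwa [← norm_iteratedFDeriv_fderiv, hf, norm_iteratedFDeriv_one, fderiv_sub (dd1 x) (dd0 x)] at this

/-- **Proposition (upper semicontinuity of `h₊`).** For a continuous family `c ↦ H_c` of
`C²`-convex-in-the-fiber Hamiltonians, `(x, c₀, λ₀) ∈ 𝒰₋^∞` and `ε > 0`, there are a
neighborhood `𝒩₊` of `(x, c₀, λ₀)` and `T > 0` such that
`h(-t,y,c,λ) ≤ h₊(x,c₀,λ₀) + ε·Id` for `(-t,y,c,λ) ∈ 𝒰₋` with `(y,c,λ) ∈ 𝒩₊`, `t ≥ T`,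
and `h₊(y,c,λ) ≤ h₊(x,c₀,λ₀) + ε·Id` for `(y,c,λ) ∈ 𝒩₊ ∩ 𝒰₋^∞`. -/
theorem stmt_12 {d : ℕ} {C : Type*} [MetricSpace C]
    (Hfam : C → Phase d → ℝ)
    (hsm : ∀ c, ContDiff ℝ 2 (Hfam c)) (hcvx : ∀ c, ConvexInFiber (Hfam c))
    (hper : ∀ c, PerPhase (Hfam c)) (hcont : C2CompactOpenCont Hfam)
    (φfam : C → ℝ → ℝ → Phase d → Phase d)
    (hflow : ∀ c lam, IsConformalFlow (Hfam c) lam (φfam c lam))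
    (x : Phase d) (c0 : C) (lam0 : ℝ)
    (hUinf : ∀ t : ℝ, 0 ≤ t → NoConjPts (φfam c0 lam0) x (uIcc (-t) 0))
    (S0 : Euc d →L[ℝ] Euc d)
    (hS0 : Tendsto (fun t => hGreenPlus (φfam c0 lam0) t x) atTop (nhds S0))
    (ε : ℝ) (hε : 0 < ε) :
    ∃ δ > (0:ℝ), ∃ T > (0:ℝ),
      (∀ (y : Phase d) (c : C) (lam t : ℝ),
        dist y x < δ → dist c c0 < δ → |lam - lam0| < δ → T ≤ t →
        NoConjPts (φfam c lam) y (uIcc (-t) 0) →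
        SymLE (hGreenPlus (φfam c lam) t y) (S0 + ε • ContinuousLinearMap.id ℝ (Euc d))) ∧
      (∀ (y : Phase d) (c : C) (lam : ℝ),
        dist y x < δ → dist c c0 < δ → |lam - lam0| < δ →
        (∀ t : ℝ, 0 ≤ t → NoConjPts (φfam c lam) y (uIcc (-t) 0)) →
        ∀ S : Euc d →L[ℝ] Euc d,
          Tendsto (fun t => hGreenPlus (φfam c lam) t y) atTop (nhds S) →
          SymLE S (S0 + ε • ContinuousLinearMap.id ℝ (Euc d))) := by
  have part_a : ∃ δ > (0:ℝ), ∃ T > (0:ℝ),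
      (∀ (y : Phase d) (c : C) (lam t : ℝ),
        dist y x < δ → dist c c0 < δ → |lam - lam0| < δ → T ≤ t →
        NoConjPts (φfam c lam) y (uIcc (-t) 0) →
        SymLE (hGreenPlus (φfam c lam) t y) (S0 + ε • ContinuousLinearMap.id ℝ (Euc d))) := by
    obtain ⟨T, hT1, hTS⟩ : ∃ T : ℝ, 1 ≤ T ∧
        dist (hGreenPlus (φfam c0 lam0) T x) S0 < ε / 2 := by
      have h1 := (Metric.tendsto_nhds.1 hS0 (ε / 2) (by positivity)).and (eventually_ge_atTop 1)
      obtain ⟨T, h⟩ := h1.exists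
      exact ⟨T, h.2, h.1⟩
    have hTp : 0 < T := by linarith
    have hu0 := isUnit_of_noConj (hsm c0) (hflow c0 lam0) x hTp le_rfl (hUinf T hTp.le)
    rw [hGreen_eq (hsm c0) (hflow c0 lam0) x hTp.le hu0] at hTS
    obtain ⟨η', hη', hcl⟩ := Metric.continuousAt_iff.1 (hmap_diff hu0).continuousAt (ε / 2)
      (by positivity)
    have hX0 : ContDiff ℝ 1 (fun z => -hamVF (Hfam c0) lam0 z) :=
      (hamVF_contDiff (hsm c0) lam0).neg
    obtain ⟨η, hη, Q, hQ, hmain⟩ := flow_cont hX0 (z := fun τ => φfam c0 lam0 (-τ) x)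
      (W := fun τ => fderiv ℝ (φfam c0 lam0 (-τ)) x) hTp.le
      (fun τ _ => (back_traj (hflow c0 lam0) x τ).hasDerivWithinAt)
      (back_flow (hsm c0) (hflow c0 lam0) x hTp.le).1 (η' := η' / 2) (by positivity)
    obtain ⟨R, hR⟩ := hQ.exists_bound_of_continuousOn (PP d).continuous.continuousOn
    set e := η / (2 * (‖JJ d‖ + 1)) with he
    have hep : 0 < e := by positivity
    have he2 : ‖JJ d‖ * e ≤ η / 2 := by
      have : e * (2 * (‖JJ d‖ + 1)) = η := div_mul_cancel₀ _ (by positivity)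
      nlinarith [norm_nonneg (JJ d)]
    obtain ⟨δ1, hδ1, hδc⟩ := hcont c0 Q hQ e hep
    set δ2 := η / (2 * (|R| + ‖PP d‖ + 1)) with hδ2
    have hδ2p : 0 < δ2 := by positivity
    have hδ2e : δ2 * (|R| + ‖PP d‖ + 1) = η / 2 := by
      rw [hδ2]; field_simp
    have hδR : δ2 * |R| ≤ η / 2 := by
      nlinarith [norm_nonneg (PP d), mul_nonneg hδ2p.le (norm_nonneg (PP d))]
    have hδP : δ2 * ‖PP d‖ ≤ η / 2 := by
      nlinarith [abs_nonneg R, mul_nonneg hδ2p.le (abs_nonneg R)]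
    refine ⟨min η (min δ1 δ2), by positivity, T, hTp, ?_⟩
    intro y c lam t hy hc hlam hTt hn
    have hy' : dist y x < η := hy.trans_le (min_le_left _ _)
    have hc' : dist c c0 < δ1 := hc.trans_le ((min_le_right _ _).trans (min_le_left _ _))
    have hlam' : |lam - lam0| < δ2 := hlam.trans_le ((min_le_right _ _).trans (min_le_right _ _))
    have hclose := hmain (fun z => -hamVF (Hfam c) lam z) (fun τ => φfam c lam (-τ) y)
      (fun τ => fderiv ℝ (φfam c lam (-τ)) y)
      (fun τ _ => (back_traj (hflow c lam) y τ).hasDerivWithinAt)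
      (back_flow (hsm c) (hflow c lam) y hTp.le).1
      (by rw [back_zero (hflow c lam) y, back_zero (hflow c0 lam0) x])
      (by
        simp only [neg_zero, (hflow c lam).1, (hflow c0 lam0).1]
        rw [← dist_eq_norm]; exact hy'.le)
      (by
        intro w hw
        obtain ⟨f1, f2⟩ := fderiv_close (hsm c) (hsm c0) (x := w) (e := e)
          (fun j hj => hδc c hc' j hj w hw)
        constructor
        · rw [hamVF_eq (hsm c), hamVF_eq (hsm c0)]
          have e1 : -(JJ d (fderiv ℝ (Hfam c) w) - lam • PP d w) -
              -(JJ d (fderiv ℝ (Hfam c0) w) - lam0 • PP d w) =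
              (lam - lam0) • PP d w - JJ d (fderiv ℝ (Hfam c) w - fderiv ℝ (Hfam c0) w) := by
            rw [map_sub, sub_smul]; abel
          simp only [e1]
          refine (norm_sub_le _ _).trans ?_
          have g1 : ‖(lam - lam0) • PP d w‖ ≤ η / 2 := by
            rw [norm_smul, Real.norm_eq_abs]
            refine le_trans ?_ hδR
            exact mul_le_mul hlam'.le ((hR w hw).trans (le_abs_self R)) (norm_nonneg _) hδ2p.le
          have g2 := ((JJ d).le_opNorm (fderiv ℝ (Hfam c) w - fderiv ℝ (Hfam c0) w)).trans
            ((mul_le_mul_of_nonneg_left f1 (norm_nonneg _)).trans he2)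
          linarith
        · rw [fderiv_fun_neg, fderiv_fun_neg, hamVF_fderiv (hsm c), hamVF_fderiv (hsm c0)]
          have e1 : -(JJ d ∘L fderiv ℝ (fderiv ℝ (Hfam c)) w - lam • PP d) -
              -(JJ d ∘L fderiv ℝ (fderiv ℝ (Hfam c0)) w - lam0 • PP d) =
              (lam - lam0) • PP d - JJ d ∘L (fderiv ℝ (fderiv ℝ (Hfam c)) w -
                fderiv ℝ (fderiv ℝ (Hfam c0)) w) := by
            rw [ContinuousLinearMap.comp_sub]; module
          rw [e1]
          refine (norm_sub_le _ _).trans ?_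
          have g1 : ‖(lam - lam0) • PP d‖ ≤ η / 2 := by
            rw [norm_smul, Real.norm_eq_abs]
            exact (mul_le_mul_of_nonneg_right hlam'.le (norm_nonneg _)).trans hδP
          have g2 := ((JJ d).opNorm_comp_le (fderiv ℝ (fderiv ℝ (Hfam c)) w -
            fderiv ℝ (fderiv ℝ (Hfam c0)) w)).trans
            ((mul_le_mul_of_nonneg_left f2 (norm_nonneg _)).trans he2)
          linarith)
    have hTS2 := hcl (x := fderiv ℝ (φfam c lam (-T)) y) (by
      rw [dist_eq_norm]; exact lt_of_le_of_lt hclose (by linarith))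
    have hdist := (dist_triangle _ _ _).trans_lt (add_lt_add hTS2 hTS)
    rw [add_halves, dist_eq_norm] at hdist
    have hunits : ∀ τ ∈ Icc T t, IsUnit (bblk (fderiv ℝ (φfam c lam (-τ)) y)) := fun τ hτ =>
      isUnit_of_noConj (hsm c) (hflow c lam) y (hTp.trans_le hτ.1) hτ.2 hn
    rw [hGreen_eq (hsm c) (hflow c lam) y (hTp.le.trans hTt) (hunits t ⟨hTt, le_rfl⟩)]
    have hmono := green_mono (hsm c) (hcvx c) (hflow c lam) y hTp hTt hunits
    intro v
    refine (hmono v).trans ?_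
    have g1 := real_inner_le_norm
      ((hmap (fderiv ℝ (φfam c lam (-T)) y) - S0) v) v
    have g2 := (hmap (fderiv ℝ (φfam c lam (-T)) y) - S0).le_of_opNorm_le hdist.le v
    have g3 : ‖(hmap (fderiv ℝ (φfam c lam (-T)) y) - S0) v‖ * ‖v‖ ≤ ε * ‖v‖ * ‖v‖ :=
      mul_le_mul_of_nonneg_right g2 (norm_nonneg _)
    rw [sub_apply, inner_sub_left] at g1
    rw [add_apply, inner_add_left, smul_apply, ContinuousLinearMap.id_apply, inner_smul_left,
      real_inner_self_eq_norm_mul_norm, conj_trivial]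
    rw [sub_apply] at g3
    linarith
  obtain ⟨δ, hδ, T, hT, ha⟩ := part_a
  refine ⟨δ, hδ, T, hT, ha, ?_⟩
  intro y c lam hy hc hlam hn S hS v
  have hlim : Tendsto (fun t => ⟪hGreenPlus (φfam c lam) t y v, v⟫) atTop (nhds ⟪S v, v⟫) := by
    have h1 : Continuous (fun A : Euc d →L[ℝ] Euc d => ⟪A v, v⟫) := by fun_prop
    exact (h1.tendsto S).comp hS
  refine le_of_tendsto hlim ?_
  filter_upwards [eventually_ge_atTop T] with t ht
  exact ha y c lam t hy hc hlam ht (hn t (hT.le.trans ht)) v
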